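/- Let X be a star decomposable simplicial complex, let W ⊆ V(X) induce a star partition of X, and let ≺ be a total order on W inducing a star decomposition of X (i.e. of (X,X₀) for some X₀ ⊆ V(X)). For v ∈ V(X) let p(v) be the ≺-last vertex among the w ∈ W with v ∈ st({w},X). Define a partial order ≺' on V(X) by: v ≺' v' whenever p(v) ≺ p(v'); v ≺' w whenever w ∈ W, p(v) = w and v ≠ w; and v, v' are ≺'-incomparable whenever p(v) = p(v') and v, v' ∉ W. Then X is vertex decomposable, with a shedding order that is a linear extension of ≺'. -/

import Mathlib

/-! Common definitions: finite abstract simplicial complexes, links, stars,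
barycentric subdivision, joins, collapsibility, shellability, vertex
decomposability, star decomposability (also "in vertices"), and simplicial
homology (reduced, over ℤ and ℤ₂). -/

namespace Paper

open Finset

variable {V : Type*} [DecidableEq V]

/-- `K` is a (finite, abstract) simplicial complex: downward closed family of finsets. -/
def IsCplx (K : Finset (Finset V)) : Prop :=
  ∀ σ ∈ K, ∀ τ ⊆ σ, τ ∈ K

/-- Vertex set of a complex. -/
def verts (K : Finset (Finset V)) : Finset V := K.sup id

/-- Dimension of a complex (as an integer; `-1` for `∅` and `{∅}`). -/
def dim (K : Finset (Finset V)) : ℤ := ((K.sup Finset.card : ℕ) : ℤ) - 1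

/-- The facets (inclusion-maximal faces) of `K`. -/
def facets (K : Finset (Finset V)) : Finset (Finset V) :=
  K.filter fun σ => ∀ τ ∈ K, σ ⊆ τ → σ = τ

/-- `K` is pure `d`-dimensional: it is nonempty, every face has dimension at most `d`
and every face is contained in a face of dimension exactly `d`. -/
def PureDim (K : Finset (Finset V)) (d : ℤ) : Prop :=
  K.Nonempty ∧ (∀ σ ∈ K, (σ.card : ℤ) ≤ d + 1) ∧
    ∀ σ ∈ K, ∃ τ ∈ K, σ ⊆ τ ∧ (τ.card : ℤ) = d + 1

/-- Link of a face. -/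
def lk (σ : Finset V) (K : Finset (Finset V)) : Finset (Finset V) :=
  (K.filter fun τ => σ ⊆ τ).image fun τ => τ \ σ

/-- Closed star of a face. -/
def star (σ : Finset V) (K : Finset (Finset V)) : Finset (Finset V) :=
  K.filter fun τ => τ ∪ σ ∈ K

/-- Union of the closed stars of a set of vertices. -/
def starSet (S : Finset V) (K : Finset (Finset V)) : Finset (Finset V) :=
  K.filter fun τ => ∃ v ∈ S, τ ∪ {v} ∈ K

/-- Subcomplex induced on a vertex set `S`. -/
def induced (S : Finset V) (K : Finset (Finset V)) : Finset (Finset V) :=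
  K.filter fun σ => σ ⊆ S

/-- Deletion of a vertex:  `K - v`. -/
def deleteV (v : V) (K : Finset (Finset V)) : Finset (Finset V) :=
  K.filter fun σ => v ∉ σ

/-- The full simplex on vertex set `σ`. -/
def simplexCplx (σ : Finset V) : Finset (Finset V) := σ.powerset

/-- The boundary `∂σ` of the simplex on `σ`: all proper subsets of `σ`. -/
def bdSimplex (σ : Finset V) : Finset (Finset V) := σ.powerset.erase σ

/-- Barycentric subdivision: vertices are the nonempty faces of `K`, faces are
chains of nonempty faces of `K`. -/
def sd (K : Finset (Finset V)) : Finset (Finset (Finset V)) :=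
  if K = ∅ then ∅ else
    K.powerset.filter fun c => (∅ ∉ c) ∧ ∀ σ ∈ c, ∀ τ ∈ c, σ ⊆ τ ∨ τ ⊆ σ

/-- Join of two simplicial complexes (on the disjoint union of vertex types). -/
def join {α β : Type*} [DecidableEq α] [DecidableEq β]
    (X : Finset (Finset α)) (Y : Finset (Finset β)) : Finset (Finset (α ⊕ β)) :=
  (X ×ˢ Y).image fun p => p.1.image Sum.inl ∪ p.2.image Sum.inr

/-- `K'` arises from `K` by an elementary collapse: remove a free face `σ`
together with the unique face `τ` properly containing it. -/
def ElemCollapse (K K' : Finset (Finset V)) : Prop :=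
  ∃ σ ∈ K, ∃ τ ∈ K, σ ⊂ τ ∧ (∀ ρ ∈ K, σ ⊂ ρ → ρ = τ) ∧ K' = (K.erase σ).erase τ

/-- `K` collapses to `K'`. -/
def CollapsesTo (K K' : Finset (Finset V)) : Prop :=
  Relation.ReflTransGen ElemCollapse K K'

/-- `K` is collapsible: it collapses to a single vertex. -/
def Collapsible (K : Finset (Finset V)) : Prop :=
  ∃ w : V, CollapsesTo K ({∅, {w}} : Finset (Finset V))

/-- The removal-collapsibility condition: `K` is empty, or becomes collapsible
after removal of a set of facets. -/
def RC (K : Finset (Finset V)) : Prop :=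
  K = ∅ ∨ ∃ F ⊆ facets K, Collapsible (K \ F)

/-- The hereditary removal-collapsibility condition: the link of every face
(including the empty face, whose link is `K` itself) satisfies (RC). -/
def HRC (K : Finset (Finset V)) : Prop :=
  ∀ σ ∈ K, RC (lk σ K)

/-- `K` is shellable: there is a total order of its facets such that each facet
meets the union of the previous ones in a pure complex of codimension one. -/
def Shellable (K : Finset (Finset V)) : Prop :=
  ∃ L : List (Finset V), L.Nodup ∧ L.toFinset = facets K ∧
    ∀ i : ℕ, (hi : i < L.length) → 1 ≤ i →
      PureDim ((L.get ⟨i, hi⟩).powerset ∩ ((L.take i).map Finset.powerset).foldr (· ∪ ·) ∅)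
        (((L.get ⟨i, hi⟩).card : ℤ) - 2)

/-- Vertex decomposability (Provan–Billera) of a pure complex. -/
inductive VD : Finset (Finset V) → Prop
  | simplex (σ : Finset V) : VD σ.powerset
  | shed (K : Finset (Finset V)) (v : V) (hv : {v} ∈ K)
      (hdel : PureDim (deleteV v K) (dim K)) (hVDdel : VD (deleteV v K))
      (hlk : PureDim (lk {v} K) (dim K - 1)) (hVDlk : VD (lk {v} K)) : VD K

/-- `L` is a shedding order of `K` (a total order on `V(K)`, given as a
duplicate-free list, witnessing vertex decomposability; once a simplex is
reached, an arbitrary order of its vertices qualifies). -/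
inductive SheddingOrder : List V → Finset (Finset V) → Prop
  | simplex (σ : Finset V) (L : List V) (hnd : L.Nodup) (hfin : L.toFinset = σ) :
      SheddingOrder L σ.powerset
  | cons (v : V) (L : List V) (K : Finset (Finset V)) (hv : {v} ∈ K) (hvL : v ∉ L)
      (hcov : insert v L.toFinset = verts K)
      (hdel : PureDim (deleteV v K) (dim K))
      (hrest : SheddingOrder L (deleteV v K))
      (hlk : PureDim (lk {v} K) (dim K - 1)) (hVDlk : VD (lk {v} K)) :
      SheddingOrder (v :: L) K

/-- `W` induces a star partition of `X`: the stars of the vertices of `W`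
cover `X` and no two distinct vertices of `W` lie in a common face. -/
def StarPartition (W : Finset V) (X : Finset (Finset V)) : Prop :=
  (∀ σ ∈ X, ∃ w ∈ W, σ ∪ {w} ∈ X) ∧
    ∀ w₁ ∈ W, ∀ w₂ ∈ W, w₁ ≠ w₂ → ¬∃ σ ∈ X, w₁ ∈ σ ∧ w₂ ∈ σ

/-- The overlap `O_X(x, W') = lk(x,X) ∩ st(W',X)`. -/
def overlap (X : Finset (Finset V)) (x : V) (W' : Finset V) : Finset (Finset V) :=
  lk {x} X ∩ starSet W' X

/-- Star decomposability of the pair `(X, X₀)`.  The total order on the set `W`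
inducing the star partition is encoded as a duplicate-free list `L` (earlier in
the list = smaller in the order). -/
inductive StarDec : Finset (Finset V) → Finset V → Prop
  | base : StarDec ({∅} : Finset (Finset V)) (∅ : Finset V)
  | step (X : Finset (Finset V)) (X₀ : Finset V) (k : ℤ) (hk : 0 ≤ k) (hpure : PureDim X k)
      (L : List V) (hne : L ≠ []) (hnd : L.Nodup) (hsub : L.toFinset ⊆ verts X)
      (hsp : StarPartition L.toFinset X)
      (horder : ∃ i < L.length, X₀ = (L.drop i).toFinset)
      (U : ℕ → Finset V)
      (hUne : ∀ i, i + 1 < L.length → (U i).Nonempty)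
      (hUsub : ∀ i, (hi : i + 1 < L.length) →
        U i ⊆ verts (lk {L.get ⟨i, Nat.lt_of_succ_lt hi⟩} X))
      (hUst : ∀ i, (hi : i + 1 < L.length) →
        starSet (U i) (lk {L.get ⟨i, Nat.lt_of_succ_lt hi⟩} X) =
          overlap X (L.get ⟨i, Nat.lt_of_succ_lt hi⟩) ((L.drop (i + 1)).toFinset))
      (hlink : ∀ i, (hi : i + 1 < L.length) →
        StarDec (lk {L.get ⟨i, Nat.lt_of_succ_lt hi⟩} X) (U i))
      (Ulast : Finset V)
      (hlast : StarDec (lk {L.getLast hne} X) Ulast) :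
      StarDec X X₀

/-- The order encoded by the list `L` induces a star decomposition of `(X, X₀)`. -/
def InducesStarDecomp (L : List V) (X : Finset (Finset V)) (X₀ : Finset V) : Prop :=
  (L = [] ∧ X = ({∅} : Finset (Finset V)) ∧ X₀ = ∅) ∨
  ∃ hne : L ≠ [], L.Nodup ∧ StarPartition L.toFinset X ∧
    (∃ i < L.length, X₀ = (L.drop i).toFinset) ∧
    (∀ i, (hi : i + 1 < L.length) →
      ∃ U : Finset V, U.Nonempty ∧ U ⊆ verts (lk {L.get ⟨i, Nat.lt_of_succ_lt hi⟩} X) ∧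
        starSet U (lk {L.get ⟨i, Nat.lt_of_succ_lt hi⟩} X) =
          overlap X (L.get ⟨i, Nat.lt_of_succ_lt hi⟩) ((L.drop (i + 1)).toFinset) ∧
        StarDec (lk {L.get ⟨i, Nat.lt_of_succ_lt hi⟩} X) U) ∧
    (∃ U : Finset V, StarDec (lk {L.getLast hne} X) U)

/-- Star decomposability *in vertices* of the pair `(sd Y, Y₀)`; the data is the
underlying complex `Y` together with `Y₀ ⊆ V(Y)`.  The total order on `V(Y)` is
encoded as a duplicate-free list `L`. -/
inductive StarDecV : Finset (Finset V) → Finset V → Prop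
  | base : StarDecV ({∅} : Finset (Finset V)) (∅ : Finset V)
  | step (Y : Finset (Finset V)) (Y₀ : Finset V) (k : ℤ) (hk : 0 ≤ k) (hpure : PureDim Y k)
      (L : List V) (hne : L ≠ []) (hnd : L.Nodup) (hV : L.toFinset = verts Y)
      (horder : ∃ i < L.length, Y₀ = (L.drop i).toFinset)
      (hlink : ∀ i, (hi : i + 1 < L.length) →
        StarDecV (lk {L.get ⟨i, Nat.lt_of_succ_lt hi⟩} Y)
          (verts (lk {L.get ⟨i, Nat.lt_of_succ_lt hi⟩} Y) ∩ (L.drop (i + 1)).toFinset))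
      (hlast : StarDecV (lk {L.getLast hne} Y) (verts (lk {L.getLast hne} Y))) :
      StarDecV Y Y₀

/-- The order encoded by the list `L` induces a star decomposition of
`(sd Y, Y₀)` in vertices. -/
def InducesStarDecompV (L : List V) (Y : Finset (Finset V)) (Y₀ : Finset V) : Prop :=
  (L = [] ∧ Y = ({∅} : Finset (Finset V)) ∧ Y₀ = ∅) ∨
  ∃ hne : L ≠ [], L.Nodup ∧ L.toFinset = verts Y ∧
    (∃ i < L.length, Y₀ = (L.drop i).toFinset) ∧
    (∀ i, (hi : i + 1 < L.length) →
      StarDecV (lk {L.get ⟨i, Nat.lt_of_succ_lt hi⟩} Y)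
        (verts (lk {L.get ⟨i, Nat.lt_of_succ_lt hi⟩} Y) ∩ (L.drop (i + 1)).toFinset)) ∧
    StarDecV (lk {L.getLast hne} Y) (verts (lk {L.getLast hne} Y))

/-- Simplicial isomorphism between two complexes. -/
def SimpIso {α β : Type*} [DecidableEq α] [DecidableEq β]
    (K : Finset (Finset α)) (L : Finset (Finset β)) : Prop :=
  ∃ f : α → β, Set.InjOn f ↑(verts K) ∧ K.image (fun σ => σ.image f) = L

/-- Simplicial isomorphism of pairs (complex, subcomplex). -/
def SimpIsoPair {α β : Type*} [DecidableEq α] [DecidableEq β]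
    (K K₁ : Finset (Finset α)) (L L₁ : Finset (Finset β)) : Prop :=
  ∃ f : α → β, Set.InjOn f ↑(verts K) ∧ K.image (fun σ => σ.image f) = L ∧
    K₁.image (fun σ => σ.image f) = L₁

/-! Reduced simplicial homology (the empty face is included, so the chain
complex below, graded by cardinality of faces, computes *reduced* homology). -/

/-- Faces of `K` of cardinality `n`. -/
def kfaces (K : Finset (Finset V)) (n : ℕ) : Finset (Finset V) :=
  K.filter fun σ => σ.card = n

/-- The mod 2 boundary operator, from chains on faces of cardinality `n+1`
to chains on faces of cardinality `n`. -/
noncomputable def bdry2 (K : Finset (Finset V)) (n : ℕ) :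
    (↥(kfaces K (n + 1)) → ZMod 2) →ₗ[ZMod 2] (↥(kfaces K n) → ZMod 2) :=
  Matrix.mulVecLin (Matrix.of fun (τ : ↥(kfaces K n)) (σ : ↥(kfaces K (n + 1))) =>
    if (τ : Finset V) ⊆ (σ : Finset V) then (1 : ZMod 2) else 0)

/-- The reduced Betti number `β̃ᵢ(K; ℤ₂)`. -/
noncomputable def betti2 (K : Finset (Finset V)) (i : ℕ) : ℕ :=
  Module.finrank (ZMod 2) (LinearMap.ker (bdry2 K i)) -
    Module.finrank (ZMod 2) (LinearMap.range (bdry2 K (i + 1)))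

/-- Signed incidence coefficient (with respect to an arbitrary, but fixed,
linear order on the vertices; reduced homology does not depend on the choice). -/
noncomputable def coeffInt (σ τ : Finset V) : ℤ :=
  letI : LinearOrder V := IsWellOrder.linearOrder WellOrderingRel
  (σ \ τ).sum fun v => (-1 : ℤ) ^ ((σ.filter fun u => u < v).card)

/-- The integral boundary operator, from chains on faces of cardinality `n+1`
to chains on faces of cardinality `n`. -/
noncomputable def bdryZ (K : Finset (Finset V)) (n : ℕ) :
    (↥(kfaces K (n + 1)) → ℤ) →ₗ[ℤ] (↥(kfaces K n) → ℤ) :=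
  Matrix.mulVecLin (Matrix.of fun (τ : ↥(kfaces K n)) (σ : ↥(kfaces K (n + 1))) =>
    if (τ : Finset V) ⊆ (σ : Finset V) then coeffInt (σ : Finset V) (τ : Finset V) else 0)

/-- `K` has trivial reduced (integral) homology: `H̃ₙ(K; ℤ) = 0` for all
`n ≥ -1`. -/
def TrivialRedHomology (K : Finset (Finset V)) : Prop :=
  K.Nonempty ∧ LinearMap.range (bdryZ K 0) = ⊤ ∧
    ∀ n : ℕ, LinearMap.ker (bdryZ K n) = LinearMap.range (bdryZ K (n + 1))

/-- Reduced Euler characteristic. -/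
def redEuler (K : Finset (Finset V)) : ℤ :=
  (∑ σ ∈ K.filter fun σ => σ ≠ ∅, (-1 : ℤ) ^ (σ.card - 1)) - 1

/-! The star of a vertex `w` is the cone over its link. If `w` comes before other vertices of `W`,
induction on the dimension sheds the link of `w` down to its overlap with the later stars, and this
lifts to the union of the stars from `w` on: the shed vertices do not lie in the later stars, and
coning keeps their links vertex decomposable. Afterwards the link of `w` is the overlap, which is
vertex decomposable, so `w` can be shed as well, leaving the union of the later stars. The last
star is a cone over a vertex decomposable complex, and a cone can be shed down to its apex. The
vertices shed in the block of `w` are exactly the `v` with `p(v) = w`, and `w` is the last of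
them, which is what `≺'` asks for. -/

section Complexes

variable {K Y : Finset (Finset V)} {S : Finset V} {σ τ : Finset V} {v w : V} {d : ℤ}

theorem mem_verts : v ∈ verts K ↔ ∃ σ ∈ K, v ∈ σ := by
  simp only [verts, mem_sup, id]

theorem mem_verts_of_singleton_mem (hv : {v} ∈ K) : v ∈ verts K :=
  mem_verts.2 ⟨_, hv, mem_singleton_self v⟩

theorem verts_mono (h : K ⊆ Y) : verts K ⊆ verts Y :=
  sup_mono h

theorem verts_powerset : verts σ.powerset = σ :=
  Subset.antisymm (Finset.sup_le fun _ => mem_powerset.1) (le_sup (f := id) (mem_powerset_self σ))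

theorem mem_lk_singleton : τ ∈ lk {w} K ↔ w ∉ τ ∧ insert w τ ∈ K := by
  simp only [lk, mem_image, mem_filter, singleton_subset_iff, sdiff_singleton_eq_erase]
  constructor
  · rintro ⟨ρ, ⟨hρ, hw⟩, rfl⟩
    exact ⟨notMem_erase w ρ, by rwa [insert_erase hw]⟩
  · rintro ⟨hw, hτ⟩
    exact ⟨insert w τ, ⟨hτ, mem_insert_self w τ⟩, erase_insert hw⟩

theorem notMem_verts_lk_self : w ∉ verts (lk {w} K) := by
  simp only [mem_verts, mem_lk_singleton]
  grind

theorem verts_lk_subset : verts (lk {v} K) ⊆ verts K := by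
  intro w hw
  obtain ⟨τ, hτ, hwτ⟩ := mem_verts.1 hw
  exact mem_verts.2 ⟨_, (mem_lk_singleton.1 hτ).2, mem_insert_of_mem hwτ⟩

theorem mem_verts_of_nonempty_lk (h : (lk {w} K).Nonempty) : w ∈ verts K := by
  obtain ⟨τ, hτ⟩ := h
  exact mem_verts.2 ⟨_, (mem_lk_singleton.1 hτ).2, mem_insert_self w τ⟩

theorem lk_union_of_notMem_verts (hv : v ∉ verts Y) : lk {v} (K ∪ Y) = lk {v} K := by
  ext τ
  have hτ : insert v τ ∉ Y := fun h => hv (mem_verts.2 ⟨_, h, mem_insert_self v τ⟩)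
  simp only [mem_lk_singleton, mem_union, hτ, or_false]

theorem mem_deleteV : τ ∈ deleteV v K ↔ τ ∈ K ∧ v ∉ τ :=
  mem_filter

theorem deleteV_subset : deleteV v K ⊆ K :=
  filter_subset _ _

theorem deleteV_union : deleteV v (K ∪ Y) = deleteV v K ∪ deleteV v Y :=
  filter_union _ _ _

theorem deleteV_of_notMem_verts (hv : v ∉ verts K) : deleteV v K = K :=
  filter_true_of_mem fun σ hσ hvσ => hv (mem_verts.2 ⟨σ, hσ, hvσ⟩)

theorem notMem_verts_deleteV_self : v ∉ verts (deleteV v K) := by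
  simp only [mem_verts, mem_deleteV]
  grind

theorem mem_star_singleton : σ ∈ star {w} K ↔ σ ∈ K ∧ insert w σ ∈ K := by
  rw [star, mem_filter, union_singleton]

theorem mem_starSet : σ ∈ starSet S K ↔ ∃ v ∈ S, σ ∈ star {v} K := by
  simp only [starSet, star, mem_filter]
  grind

theorem starSet_subset : starSet S K ⊆ K :=
  filter_subset _ _

theorem starSet_singleton : starSet {w} K = star {w} K := by
  ext σ
  simp only [mem_starSet, mem_singleton, exists_eq_left]

theorem starSet_insert : starSet (insert w S) K = star {w} K ∪ starSet S K := by
  ext σ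
  simp only [mem_starSet, mem_union, exists_mem_insert]

theorem StarPartition.starSet_eq (h : StarPartition S K) : starSet S K = K :=
  filter_true_of_mem h.1

namespace IsCplx

theorem singleton_mem_iff (hK : IsCplx K) : {v} ∈ K ↔ v ∈ verts K := by
  refine ⟨mem_verts_of_singleton_mem, fun hv => ?_⟩
  obtain ⟨σ, hσ, hvσ⟩ := mem_verts.1 hv
  exact hK σ hσ _ (singleton_subset_iff.2 hvσ)

protected theorem lk (hK : IsCplx K) : IsCplx (lk {w} K) := by
  intro σ hσ τ hτ
  rw [mem_lk_singleton] at hσ ⊢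
  exact ⟨fun hw => hσ.1 (hτ hw), hK _ hσ.2 _ (insert_subset_insert w hτ)⟩

protected theorem deleteV (hK : IsCplx K) : IsCplx (deleteV v K) := by
  intro σ hσ τ hτ
  rw [mem_deleteV] at hσ ⊢
  exact ⟨hK σ hσ.1 τ hτ, fun hv => hσ.2 (hτ hv)⟩

protected theorem starSet (hK : IsCplx K) : IsCplx (starSet S K) := by
  intro σ hσ τ hτ
  simp only [mem_starSet, mem_star_singleton] at hσ ⊢
  obtain ⟨v, hv, hσK, hvσ⟩ := hσ
  exact ⟨v, hv, hK σ hσK τ hτ, hK _ hvσ _ (insert_subset_insert v hτ)⟩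

protected theorem inter (hK : IsCplx K) (hY : IsCplx Y) : IsCplx (K ∩ Y) := fun σ hσ τ hτ =>
  mem_inter.2 ⟨hK σ (mem_inter.1 hσ).1 τ hτ, hY σ (mem_inter.1 hσ).2 τ hτ⟩

theorem verts_deleteV (hK : IsCplx K) : verts (deleteV v K) = (verts K).erase v := by
  ext x
  rw [mem_erase, ← hK.deleteV.singleton_mem_iff, ← hK.singleton_mem_iff, mem_deleteV,
    mem_singleton, and_comm, ne_comm]

end IsCplx

namespace PureDim

omit [DecidableEq V] in
theorem dim_eq (h : PureDim K d) : dim K = d := by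
  obtain ⟨⟨σ, hσ⟩, hle, hext⟩ := h
  obtain ⟨τ, hτ, -, hcard⟩ := hext σ hσ
  have hsup : K.sup card = τ.card :=
    le_antisymm (Finset.sup_le fun ρ hρ => by have := hle ρ hρ; omega) (le_sup (f := card) hτ)
  rw [dim, hsup, hcard, add_sub_cancel_right]

protected theorem union (hK : PureDim K d) (hY : PureDim Y d) : PureDim (K ∪ Y) d := by
  refine ⟨hK.1.mono subset_union_left, fun σ hσ => ?_, fun σ hσ => ?_⟩
  · exact (mem_union.1 hσ).elim (hK.2.1 σ) (hY.2.1 σ)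
  · rcases mem_union.1 hσ with hσ | hσ
    · obtain ⟨τ, hτ, hστ⟩ := hK.2.2 σ hσ
      exact ⟨τ, mem_union_left _ hτ, hστ⟩
    · obtain ⟨τ, hτ, hστ⟩ := hY.2.2 σ hσ
      exact ⟨τ, mem_union_right _ hτ, hστ⟩

protected theorem starSet (hK : PureDim K d) (hvS : v ∈ S) (hv : v ∈ verts K) :
    PureDim (starSet S K) d := by
  refine ⟨?_, fun σ hσ => hK.2.1 σ (starSet_subset hσ), fun σ hσ => ?_⟩
  · obtain ⟨σ, hσ, hvσ⟩ := mem_verts.1 hv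
    exact ⟨σ, mem_starSet.2 ⟨v, hvS, mem_star_singleton.2 ⟨hσ, by rwa [insert_eq_of_mem hvσ]⟩⟩⟩
  · obtain ⟨w, hw, hwσ⟩ := mem_starSet.1 hσ
    obtain ⟨τ, hτ, hστ, hcard⟩ := hK.2.2 _ (mem_star_singleton.1 hwσ).2
    have hwτ : insert w τ = τ := insert_eq_of_mem (hστ (mem_insert_self w σ))
    exact ⟨τ, mem_starSet.2 ⟨w, hw, mem_star_singleton.2 ⟨hτ, by rwa [hwτ]⟩⟩,
      (subset_insert w σ).trans hστ, hcard⟩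

protected theorem lk (hK : PureDim K d) (hw : w ∈ verts K) : PureDim (lk {w} K) (d - 1) := by
  have erase_mem : ∀ σ ∈ K, w ∈ σ → σ.erase w ∈ lk {w} K := fun σ hσ hwσ =>
    mem_lk_singleton.2 ⟨notMem_erase w σ, by rwa [insert_erase hwσ]⟩
  refine ⟨?_, fun σ hσ => ?_, fun σ hσ => ?_⟩
  · obtain ⟨σ, hσ, hwσ⟩ := mem_verts.1 hw
    exact ⟨_, erase_mem σ hσ hwσ⟩
  · obtain ⟨hwσ, hσK⟩ := mem_lk_singleton.1 hσ
    have := hK.2.1 _ hσK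
    have := card_insert_of_notMem hwσ
    omega
  · obtain ⟨hwσ, hσK⟩ := mem_lk_singleton.1 hσ
    obtain ⟨τ, hτ, hστ, hcard⟩ := hK.2.2 _ hσK
    have hwτ : w ∈ τ := hστ (mem_insert_self w σ)
    refine ⟨τ.erase w, erase_mem τ hτ hwτ,
      subset_erase.2 ⟨(subset_insert w σ).trans hστ, hwσ⟩, ?_⟩
    have := card_erase_add_one hwτ
    omega

end PureDim

end Complexes

section Cone

variable {K : Finset (Finset V)} {σ : Finset V} {v w : V} {d : ℤ}

/-- The cone over the complex `K` with apex `w`; this is the intended notion only when `w` is not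
a vertex of `K`. -/
def cone (w : V) (K : Finset (Finset V)) : Finset (Finset V) :=
  K ∪ K.image (insert w)

theorem subset_cone : K ⊆ cone w K :=
  subset_union_left

theorem insert_mem_cone (hσ : σ ∈ K) : insert w σ ∈ cone w K :=
  mem_union_right _ (mem_image_of_mem _ hσ)

theorem cone_powerset : cone w σ.powerset = (insert w σ).powerset :=
  (powerset_insert σ w).symm

theorem mem_cone (hK : IsCplx K) : σ ∈ cone w K ↔ σ.erase w ∈ K := by
  rw [cone, mem_union, mem_image]
  constructor
  · rintro (hσ | ⟨τ, hτ, rfl⟩)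
    · exact hK σ hσ _ (erase_subset w σ)
    · exact hK τ hτ _ (erase_insert_subset w τ)
  · intro hσ
    by_cases hw : w ∈ σ
    · exact Or.inr ⟨σ.erase w, hσ, insert_erase hw⟩
    · exact Or.inl (erase_eq_of_notMem hw ▸ hσ)

theorem deleteV_cone (hvw : v ≠ w) : deleteV v (cone w K) = cone w (deleteV v K) := by
  ext σ
  simp only [cone, mem_deleteV, mem_union, mem_image]
  grind

theorem deleteV_cone_self (hw : w ∉ verts K) : deleteV w (cone w K) = K := by
  rw [cone, deleteV_union, deleteV_of_notMem_verts hw, union_eq_left]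
  intro σ hσ
  simp only [mem_deleteV, mem_image] at hσ
  grind

theorem star_eq_cone_lk (hK : IsCplx K) : star {w} K = cone w (lk {w} K) := by
  ext σ
  have insert_erase_eq : insert w (σ.erase w) = insert w σ := by grind
  rw [mem_cone hK.lk, mem_lk_singleton, mem_star_singleton, insert_erase_eq]
  exact ⟨fun h => ⟨notMem_erase w σ, h.2⟩, fun h => ⟨hK _ h.2 σ (subset_insert w σ), h.2⟩⟩

theorem deleteV_union_cone_lk (hK : IsCplx K) : deleteV v K ∪ cone v (lk {v} K) = K := by
  rw [← star_eq_cone_lk hK]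
  ext σ
  rw [mem_union, mem_deleteV, mem_star_singleton]
  grind

protected theorem IsCplx.cone (hK : IsCplx K) : IsCplx (cone w K) := by
  intro σ hσ τ hτ
  rw [mem_cone hK] at hσ ⊢
  exact hK _ hσ _ (erase_subset_erase w hτ)

theorem lk_cone (hK : IsCplx K) (hvw : v ≠ w) : lk {v} (cone w K) = cone w (lk {v} K) := by
  ext σ
  rw [mem_lk_singleton, mem_cone hK, mem_cone hK.lk, mem_lk_singleton, erase_insert_of_ne hvw,
    mem_erase, and_iff_right hvw]

theorem lk_cone_self (hK : IsCplx K) (hw : w ∉ verts K) : lk {w} (cone w K) = K := by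
  ext σ
  rw [mem_lk_singleton, mem_cone hK]
  constructor
  · rintro ⟨hwσ, hσ⟩
    rwa [erase_insert hwσ] at hσ
  · intro hσ
    have hwσ : w ∉ σ := fun h => hw (mem_verts.2 ⟨σ, hσ, h⟩)
    exact ⟨hwσ, by rwa [erase_insert hwσ]⟩

protected theorem PureDim.cone (hK : PureDim K (d - 1)) (hw : w ∉ verts K) :
    PureDim (cone w K) d := by
  have card_insert : ∀ σ ∈ K, (insert w σ).card = σ.card + 1 := fun σ hσ =>
    card_insert_of_notMem fun h => hw (mem_verts.2 ⟨σ, hσ, h⟩)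
  have extend : ∀ σ ∈ K, ∃ τ ∈ cone w K, insert w σ ⊆ τ ∧ (τ.card : ℤ) = d + 1 := by
    intro σ hσ
    obtain ⟨τ, hτ, hστ, hcard⟩ := hK.2.2 σ hσ
    have := card_insert τ hτ
    exact ⟨insert w τ, insert_mem_cone hτ, insert_subset_insert w hστ, by omega⟩
  refine ⟨hK.1.mono subset_cone, fun σ hσ => ?_, fun σ hσ => ?_⟩ <;>
    obtain hσ | ⟨ρ, hρ, rfl⟩ := (mem_union.1 hσ).imp_right mem_image.1
  · have := hK.2.1 σ hσ
    omega
  · have := hK.2.1 ρ hρ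
    have := card_insert ρ hρ
    omega
  · obtain ⟨τ, hτ, hστ, hcard⟩ := extend σ hσ
    exact ⟨τ, hτ, (subset_insert w σ).trans hστ, hcard⟩
  · exact extend ρ hρ

theorem PureDim.of_deleteV_of_lk (hK : IsCplx K) (hdel : PureDim (deleteV v K) d)
    (hlk : PureDim (lk {v} K) (d - 1)) : PureDim K d :=
  deleteV_union_cone_lk hK ▸ hdel.union (hlk.cone notMem_verts_lk_self)

end Cone

section Shedding

variable {K K' K'' Y : Finset (Finset V)} {A B M : List V} {v w : V} {d : ℤ}

theorem VD.of_pureDim (hK : PureDim K d) (hv : {v} ∈ K) (hdel : PureDim (deleteV v K) d)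
    (hVDdel : VD (deleteV v K)) (hVDlk : VD (lk {v} K)) : VD K := by
  obtain rfl := hK.dim_eq
  exact .shed K v hv hdel hVDdel (hK.lk (mem_verts_of_singleton_mem hv)) hVDlk

theorem VD.cone (h : VD K) (hK : IsCplx K) (hw : w ∉ verts K) : VD (cone w K) := by
  induction h with
  | simplex σ =>
    rw [cone_powerset]
    exact .simplex _
  | shed K v hv hdel _ hlk _ ihdel ihlk =>
    have hvw : v ≠ w := ne_of_mem_of_not_mem (mem_verts_of_singleton_mem hv) hw
    have hwdel : w ∉ verts (deleteV v K) := notMem_mono (verts_mono deleteV_subset) hw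
    have hpure : PureDim K (dim K + 1 - 1) := by
      simpa using PureDim.of_deleteV_of_lk hK hdel hlk
    refine .of_pureDim (hpure.cone hw) (subset_cone hv) ?_ ?_ ?_
    · rw [deleteV_cone hvw]
      exact PureDim.cone (by simpa using hdel) hwdel
    · rw [deleteV_cone hvw]
      exact ihdel hK.deleteV hwdel
    · rw [lk_cone hK hvw]
      exact ihlk hK.lk (notMem_mono verts_lk_subset hw)

namespace SheddingOrder

theorem nodup (h : SheddingOrder M K) : M.Nodup := by
  induction h with
  | simplex _ _ hnd => exact hnd
  | cons _ _ _ _ hvL _ _ _ _ _ ih => exact List.nodup_cons.2 ⟨hvL, ih⟩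

theorem toFinset_eq (h : SheddingOrder M K) : M.toFinset = verts K := by
  cases h with
  | simplex _ _ _ hfin => rw [hfin, verts_powerset]
  | cons _ _ _ _ _ hcov => rw [List.toFinset_cons, hcov]

theorem cons_of_pureDim (hK : IsCplx K) (hpure : PureDim K d) (hv : {v} ∈ K)
    (hdel : PureDim (deleteV v K) d) (hrest : SheddingOrder M (deleteV v K))
    (hVDlk : VD (lk {v} K)) : SheddingOrder (v :: M) K := by
  obtain rfl := hpure.dim_eq
  have hvK : v ∈ verts K := mem_verts_of_singleton_mem hv
  have hM : M.toFinset = (verts K).erase v := hrest.toFinset_eq.trans hK.verts_deleteV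
  refine .cons v M K hv ?_ (by rw [hM, insert_erase hvK]) hdel hrest (hpure.lk hvK) hVDlk
  rw [← List.mem_toFinset, hM]
  exact notMem_erase v _

protected theorem cone (h : SheddingOrder M K) (hK : IsCplx K) (hw : w ∉ verts K) :
    SheddingOrder (M ++ [w]) (cone w K) := by
  induction h with
  | simplex σ L hnd hfin =>
    rw [verts_powerset, ← hfin, List.mem_toFinset] at hw
    rw [cone_powerset]
    refine .simplex _ _ ?_ ?_
    · exact List.nodup_append_comm.1 (List.nodup_cons.2 ⟨hw, hnd⟩)
    · rw [List.toFinset_append, hfin, List.toFinset_cons, List.toFinset_nil, insert_empty_eq,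
        union_singleton]
  | cons v L K hv _ _ hdel _ hlk hVDlk ih =>
    have hvw : v ≠ w := ne_of_mem_of_not_mem (mem_verts_of_singleton_mem hv) hw
    have hwdel : w ∉ verts (deleteV v K) := notMem_mono (verts_mono deleteV_subset) hw
    have hpure : PureDim K (dim K + 1 - 1) := by
      simpa using PureDim.of_deleteV_of_lk hK hdel hlk
    refine .cons_of_pureDim hK.cone (hpure.cone hw) (subset_cone hv) ?_ ?_ ?_
    · rw [deleteV_cone hvw]
      exact PureDim.cone (by simpa using hdel) hwdel
    · rw [deleteV_cone hvw]
      exact ih hK.deleteV hwdel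
    · rw [lk_cone hK hvw]
      exact hVDlk.cone hK.lk (notMem_mono verts_lk_subset hw)

end SheddingOrder

theorem VD.exists_sheddingOrder (h : VD K) (hK : IsCplx K) : ∃ M, SheddingOrder M K := by
  induction h with
  | simplex σ => exact ⟨σ.toList, .simplex σ _ σ.nodup_toList σ.toList_toFinset⟩
  | shed K v hv hdel _ hlk hVDlk ihdel =>
    obtain ⟨M, hM⟩ := ihdel hK.deleteV
    exact ⟨v :: M, .cons_of_pureDim hK (.of_deleteV_of_lk hK hdel hlk) hv hdel hM hVDlk⟩

/-- `ShedsTo d A K K'`: deleting the vertices of the list `A` from `K` in turn yields `K'`, where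
all intermediate complexes are pure `d`-dimensional and each vertex has a vertex decomposable link
at the time of its deletion. These links are then automatically pure of dimension `d - 1`. -/
inductive ShedsTo (d : ℤ) : List V → Finset (Finset V) → Finset (Finset V) → Prop
  | refl {K : Finset (Finset V)} (hK : PureDim K d) : ShedsTo d [] K K
  | head {v : V} {A : List V} {K K' : Finset (Finset V)} (hv : {v} ∈ K) (hK : PureDim K d)
      (hlk : VD (lk {v} K)) (h : ShedsTo d A (deleteV v K) K') : ShedsTo d (v :: A) K K'

namespace ShedsTo

theorem pureDim_left (h : ShedsTo d A K K') : PureDim K d := by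
  cases h <;> assumption

theorem pureDim_right (h : ShedsTo d A K K') : PureDim K' d := by
  induction h with
  | refl hK => exact hK
  | head _ _ _ _ ih => exact ih

theorem trans (h : ShedsTo d A K K') (h' : ShedsTo d B K' K'') : ShedsTo d (A ++ B) K K'' := by
  induction h with
  | refl => exact h'
  | head hv hK hlk _ ih => exact .head hv hK hlk (ih h')

theorem subset (h : ShedsTo d A K K') : K' ⊆ K := by
  induction h with
  | refl => exact Subset.rfl
  | head _ _ _ _ ih => exact ih.trans deleteV_subset

theorem mem_verts_sdiff (h : ShedsTo d A K K') : ∀ a ∈ A, a ∈ verts K \ verts K' := by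
  induction h with
  | refl => exact List.forall_mem_nil _
  | head hv _ _ h ih =>
    refine List.forall_mem_cons.2 ⟨mem_sdiff.2 ⟨mem_verts_of_singleton_mem hv, ?_⟩, fun a ha => ?_⟩
    · exact notMem_mono (verts_mono h.subset) notMem_verts_deleteV_self
    · exact sdiff_subset_sdiff (verts_mono deleteV_subset) Subset.rfl (ih a ha)

theorem vd (h : ShedsTo d A K K') (hK' : VD K') : VD K := by
  induction h with
  | refl => exact hK'
  | head hv hK hlk h ih => exact .of_pureDim hK hv h.pureDim_left (ih hK') hlk

theorem sheddingOrder (h : ShedsTo d A K K') (hK : IsCplx K) (hM : SheddingOrder M K') :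
    SheddingOrder (A ++ M) K := by
  induction h with
  | refl => exact hM
  | head hv hpure hlk h ih =>
    exact .cons_of_pureDim hK hpure hv h.pureDim_left (ih hK.deleteV hM) hlk

protected theorem cone (h : ShedsTo (d - 1) A K K') (hK : IsCplx K) (hw : w ∉ verts K) :
    ShedsTo d A (cone w K) (cone w K') := by
  induction h with
  | refl hpure => exact .refl (hpure.cone hw)
  | head hv hpure hlk _ ih =>
    have hvw := ne_of_mem_of_not_mem (mem_verts_of_singleton_mem hv) hw
    refine .head (subset_cone hv) (hpure.cone hw) ?_ ?_
    · rw [lk_cone hK hvw]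
      exact hlk.cone hK.lk (notMem_mono verts_lk_subset hw)
    · rw [deleteV_cone hvw]
      exact ih hK.deleteV (notMem_mono (verts_mono deleteV_subset) hw)

protected theorem union (h : ShedsTo d A K K') (hY : PureDim Y d) (hA : ∀ a ∈ A, a ∉ verts Y) :
    ShedsTo d A (K ∪ Y) (K' ∪ Y) := by
  induction h with
  | refl hK => exact .refl (hK.union hY)
  | head hv hK hlk _ ih =>
    obtain ⟨hvY, hA⟩ := List.forall_mem_cons.1 hA
    refine .head (mem_union_left Y hv) (hK.union hY) ?_ ?_
    · rwa [lk_union_of_notMem_verts hvY]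
    · rw [deleteV_union, deleteV_of_notMem_verts hvY]
      exact ih hA

/-- A shedding of the link of `w` down to its overlap with `Y` lifts to the star, which is the cone
over the link; then the link of `w` has become the overlap, and `w` itself can be shed. -/
theorem star_union (hK : IsCplx K) (hY : IsCplx Y) (hpure : PureDim Y d) (hw : w ∉ verts Y)
    (hVD : VD (lk {w} K ∩ Y)) (h : ShedsTo (d - 1) A (lk {w} K) (lk {w} K ∩ Y)) :
    ShedsTo d (A ++ [w]) (star {w} K ∪ Y) Y := by
  have hO : IsCplx (lk {w} K ∩ Y) := hK.lk.inter hY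
  have hwO : w ∉ verts (lk {w} K ∩ Y) :=
    notMem_mono (verts_mono inter_subset_left) notMem_verts_lk_self
  have hA : ∀ a ∈ A, a ∉ verts Y := by
    intro a ha haY
    obtain ⟨halk, haO⟩ := mem_sdiff.1 (h.mem_verts_sdiff a ha)
    rw [← hK.lk.singleton_mem_iff] at halk
    rw [← hY.singleton_mem_iff] at haY
    exact haO (mem_verts_of_singleton_mem (mem_inter.2 ⟨halk, haY⟩))
  have hcone : ShedsTo d A (star {w} K ∪ Y) (cone w (lk {w} K ∩ Y) ∪ Y) :=
    star_eq_cone_lk hK ▸ (h.cone hK.lk notMem_verts_lk_self).union hpure hA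
  have hwmem : {w} ∈ cone w (lk {w} K ∩ Y) := by
    obtain ⟨σ, hσ⟩ := h.pureDim_right.1
    exact insert_mem_cone (hO σ hσ ∅ (empty_subset σ))
  have hdel : deleteV w (cone w (lk {w} K ∩ Y) ∪ Y) = Y := by
    rw [deleteV_union, deleteV_cone_self hwO, deleteV_of_notMem_verts hw,
      union_eq_right.2 inter_subset_right]
  refine hcone.trans (.head (mem_union_left Y hwmem) hcone.pureDim_right ?_ ?_)
  · rwa [lk_union_of_notMem_verts hw, lk_cone_self hO hwO]
  · rw [hdel]
    exact .refl hpure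

end ShedsTo

end Shedding

section StarDecomposition

variable {X : Finset (Finset V)} {X₀ U : Finset V} {L : List V} {σ : Finset V} {d : ℤ} {i j : ℕ}

/-- The subcomplex `st(W_{⪰ w}, X)`, where `w` is the `i`-th entry of the list `L` encoding `≺`. -/
def tailStar (L : List V) (X : Finset (Finset V)) (i : ℕ) : Finset (Finset V) :=
  starSet (L.drop i).toFinset X

theorem mem_tailStar :
    σ ∈ tailStar L X i ↔ ∃ j, ∃ hj : j < L.length, i ≤ j ∧ σ ∈ star {L[j]} X := by
  simp only [tailStar, mem_starSet, List.mem_toFinset, List.mem_drop_iff_getElem]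
  constructor
  · rintro ⟨_, ⟨k, hk, rfl⟩, hσ⟩
    exact ⟨i + k, by omega, by omega, hσ⟩
  · rintro ⟨j, hj, hij, hσ⟩
    obtain ⟨k, rfl⟩ := Nat.exists_eq_add_of_le hij
    exact ⟨_, ⟨k, by omega, rfl⟩, hσ⟩

theorem tailStar_zero (hsp : StarPartition L.toFinset X) : tailStar L X 0 = X :=
  hsp.starSet_eq

theorem tailStar_last (hne : L ≠ []) :
    tailStar L X (L.length - 1) = star {L.getLast hne} X := by
  rw [tailStar, List.drop_length_sub_one hne, List.toFinset_cons, List.toFinset_nil,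
    insert_empty_eq, starSet_singleton]

theorem tailStar_eq_union (hi : i < L.length) :
    tailStar L X i = star {L[i]} X ∪ tailStar L X (i + 1) := by
  rw [tailStar, List.drop_eq_getElem_cons hi, List.toFinset_cons, starSet_insert, tailStar]

theorem eq_of_getElem_mem_star (hsp : StarPartition L.toFinset X) (hnd : L.Nodup)
    (hi : i < L.length) (hj : j < L.length) (h : σ ∈ star {L[j]} X) (hσ : L[i] ∈ σ) : i = j := by
  by_contra hij
  have mem_W : ∀ k (hk : k < L.length), L[k] ∈ L.toFinset := fun k hk =>
    List.mem_toFinset.2 (List.getElem_mem hk)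
  exact hsp.2 _ (mem_W i hi) _ (mem_W j hj) (mt hnd.getElem_inj_iff.1 hij)
    ⟨_, (mem_star_singleton.1 h).2, mem_insert_of_mem hσ, mem_insert_self _ _⟩

theorem getElem_notMem_verts_tailStar (hsp : StarPartition L.toFinset X) (hnd : L.Nodup)
    (hi : i < L.length) : L[i] ∉ verts (tailStar L X (i + 1)) := by
  intro h
  obtain ⟨σ, hσ, hiσ⟩ := mem_verts.1 h
  obtain ⟨j, hj, hij, hσj⟩ := mem_tailStar.1 hσ
  have := eq_of_getElem_mem_star hsp hnd hi hj hσj hiσ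
  omega

/-- The conclusion drawn from a star decomposition: the vertices of `X` can be shed in blocks, one
for each entry `L[i]` but the last. Block `i` ends with `L[i]` and reduces `st(W_{⪰ L[i]}, X)` to
`st(W_{≻ L[i]}, X)`. What remains at the end is the star of the last entry. -/
structure IsStarShedding (d : ℤ) (L : List V) (X : Finset (Finset V)) : Prop where
  ne_nil : L ≠ []
  exists_shedsTo : ∀ i (hi : i + 1 < L.length),
    ∃ A, ShedsTo d (A ++ [L[i]]) (tailStar L X i) (tailStar L X (i + 1))
  vd_lk_last : VD (lk {L.getLast ne_nil} X)

/-- The property of pairs `(X, X₀)` proved by induction on star decompositions: `X` and `st(X₀, X)`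
are vertex decomposable and `X` can be shed down to `st(X₀, X)`. Only the pair `({∅}, ∅)` needs the
proviso that `X₀` be nonempty. -/
structure ShedsToStar (X : Finset (Finset V)) (X₀ : Finset V) : Prop where
  vd : VD X
  vd_starSet : X₀.Nonempty → VD (starSet X₀ X)
  exists_shedsTo : X₀.Nonempty → ∃ A, ShedsTo (dim X) A X (starSet X₀ X)

theorem exists_shedsTo_tailStar_succ (hX : IsCplx X) (hpure : PureDim X d)
    (hsp : StarPartition L.toFinset X) (hnd : L.Nodup) (hsub : L.toFinset ⊆ verts X)
    (hi : i + 1 < L.length) (hU : U.Nonempty)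
    (hUst : starSet U (lk {L[i]} X) = overlap X L[i] (L.drop (i + 1)).toFinset)
    (hlink : ShedsToStar (lk {L[i]} X) U) :
    ∃ A, ShedsTo d (A ++ [L[i]]) (tailStar L X i) (tailStar L X (i + 1)) := by
  have mem_verts_getElem : ∀ j (hj : j < L.length), L[j] ∈ verts X := fun j hj =>
    hsub (List.mem_toFinset.2 (List.getElem_mem hj))
  have hO : starSet U (lk {L[i]} X) = lk {L[i]} X ∩ tailStar L X (i + 1) := hUst
  have hY : PureDim (tailStar L X (i + 1)) d := by
    refine hpure.starSet (v := L[i + 1]) ?_ (mem_verts_getElem _ hi)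
    rw [List.drop_eq_getElem_cons hi, List.toFinset_cons]
    exact mem_insert_self _ _
  obtain ⟨A, hA⟩ := hlink.exists_shedsTo hU
  rw [(hpure.lk (mem_verts_getElem i (by omega))).dim_eq, hO] at hA
  refine ⟨A, ?_⟩
  rw [tailStar_eq_union (by omega)]
  exact .star_union hX hX.starSet hY (getElem_notMem_verts_tailStar hsp hnd _)
    (hO ▸ hlink.vd_starSet hU) hA

namespace IsStarShedding

theorem vd_tailStar (h : IsStarShedding d L X) (hX : IsCplx X) (hi : i < L.length) :
    VD (tailStar L X i) := by
  induction Nat.le_sub_one_of_lt hi using Nat.decreasingInduction with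
  | self =>
    rw [tailStar_last h.ne_nil, star_eq_cone_lk hX]
    exact h.vd_lk_last.cone hX.lk notMem_verts_lk_self
  | of_succ k hk ih =>
    obtain ⟨A, hA⟩ := h.exists_shedsTo k (by omega)
    exact hA.vd (ih (by omega))

theorem exists_shedsTo_tailStar (h : IsStarShedding d L X) (hpure : PureDim X d)
    (hsp : StarPartition L.toFinset X) (hi : i < L.length) :
    ∃ A, ShedsTo d A X (tailStar L X i) := by
  induction i with
  | zero => exact ⟨[], by rw [tailStar_zero hsp]; exact .refl hpure⟩
  | succ i ih =>
    obtain ⟨A, hA⟩ := ih (by omega)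
    obtain ⟨B, hB⟩ := h.exists_shedsTo i hi
    exact ⟨_, hA.trans hB⟩

theorem shedsToStar (h : IsStarShedding d L X) (hX : IsCplx X) (hpure : PureDim X d)
    (hsp : StarPartition L.toFinset X) (hi : i < L.length) :
    ShedsToStar X (L.drop i).toFinset where
  vd := tailStar_zero hsp ▸ h.vd_tailStar hX (by omega)
  vd_starSet _ := h.vd_tailStar hX hi
  exists_shedsTo _ := hpure.dim_eq.symm ▸ h.exists_shedsTo_tailStar hpure hsp hi

end IsStarShedding

theorem StarDec.exists_pureDim (h : StarDec X X₀) : ∃ d, PureDim X d := by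
  cases h with
  | base => exact ⟨-1, by simp [PureDim]⟩
  | step _ _ k _ hpure => exact ⟨k, hpure⟩

theorem StarDec.shedsToStar (h : StarDec X X₀) (hX : IsCplx X) : ShedsToStar X X₀ := by
  induction h with
  | base =>
    exact ⟨.simplex ∅, fun h => absurd h not_nonempty_empty, fun h => absurd h not_nonempty_empty⟩
  | step X X₀ k _ hpure L hne hnd hsub hsp horder U hUne _ hUst _ _ _ ihlink ihlast =>
    obtain ⟨i, hi, rfl⟩ := horder
    have hshed : IsStarShedding k L X := by
      refine ⟨hne, fun i hi => ?_, (ihlast hX.lk).vd⟩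
      exact exists_shedsTo_tailStar_succ hX hpure hsp hnd hsub hi (hUne i hi) (hUst i hi)
        (ihlink i hi hX.lk)
    exact hshed.shedsToStar hX hpure hsp hi

theorem StarDec.mem_verts_of_lk {w : V} (h : StarDec (lk {w} X) U) : w ∈ verts X :=
  h.exists_pureDim.elim fun _ hpure => mem_verts_of_nonempty_lk hpure.1

namespace InducesStarDecomp

theorem subset_verts (h : InducesStarDecomp L X X₀) : L.toFinset ⊆ verts X := by
  obtain ⟨rfl, -, -⟩ | ⟨hne, -, -, -, hlink, U, hlast⟩ := h
  · exact empty_subset _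
  · intro w hw
    obtain ⟨i, hi, rfl⟩ := List.mem_iff_getElem.1 (List.mem_toFinset.1 hw)
    obtain hi' | hi' : i + 1 < L.length ∨ i = L.length - 1 := by omega
    · obtain ⟨U, -, -, -, hU⟩ := hlink i hi'
      exact hU.mem_verts_of_lk
    · subst hi'
      rw [← List.getLast_eq_getElem hne]
      exact hlast.mem_verts_of_lk

theorem isStarShedding (h : InducesStarDecomp L X X₀) (hX : IsCplx X) (hpure : PureDim X d)
    (hne : L ≠ []) : IsStarShedding d L X := by
  have hsub := h.subset_verts
  obtain ⟨rfl, -, -⟩ | ⟨_, hnd, hsp, -, hlink, U, hlast⟩ := h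
  · exact absurd rfl hne
  · refine ⟨hne, fun i hi => ?_, (hlast.shedsToStar hX.lk).vd⟩
    obtain ⟨U, hUne, -, hUst, hU⟩ := hlink i hi
    exact exists_shedsTo_tailStar_succ hX hpure hsp hnd hsub hi hUne hUst (hU.shedsToStar hX.lk)

end InducesStarDecomp

end StarDecomposition

section LinearExtension

variable {X : Finset (Finset V)} {X₀ : Finset V} {L A : List V} {p : V → ℕ} {v : V} {d : ℤ}
  {i : ℕ}

/-- The partial order `≺'` of the vertices, where `p` and `L` encode the map `v ↦ p(v)` and the
ordered set `W`: the last vertex of `W` whose star contains `v` is `L[p v]`. -/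
def StarLT (p : V → ℕ) (L : List V) (a b : V) : Prop :=
  p a < p b ∨ (p a = p b ∧ b ∈ L ∧ a ≠ b)

/-- `p v` is the index in `L` of the last entry whose star contains `v`, for every vertex `v` of
`X`; the values of `p` off `verts X` are arbitrary. -/
def IsLastStarIndex (p : V → ℕ) (L : List V) (X : Finset (Finset V)) : Prop :=
  ∀ v ∈ verts X, ∃ h : p v < L.length, {v} ∈ star {L[p v]} X ∧
    ∀ j, (hj : j < L.length) → p v < j → {v} ∉ star {L[j]} X

namespace IsLastStarIndex

theorem le_iff_mem_verts_tailStar (hp : IsLastStarIndex p L X) (hX : IsCplx X) (hv : v ∈ verts X) :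
    i ≤ p v ↔ v ∈ verts (tailStar L X i) := by
  obtain ⟨hlt, hmem, hlast⟩ := hp v hv
  have hcplx : IsCplx (tailStar L X i) := hX.starSet
  rw [← hcplx.singleton_mem_iff, mem_tailStar]
  constructor
  · exact fun hi => ⟨p v, hlt, hi, hmem⟩
  · rintro ⟨j, hj, hij, hvj⟩
    exact hij.trans (not_lt.1 fun h => hlast j hj h hvj)

theorem apply_getElem (hp : IsLastStarIndex p L X) (hsp : StarPartition L.toFinset X)
    (hnd : L.Nodup) (hsub : L.toFinset ⊆ verts X) (hi : i < L.length) : p L[i] = i := by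
  obtain ⟨hlt, hmem, -⟩ := hp L[i] (hsub (List.mem_toFinset.2 (List.getElem_mem hi)))
  exact (eq_of_getElem_mem_star hsp hnd hi hlt hmem (mem_singleton_self _)).symm

theorem apply_eq_of_mem_verts_sdiff (hp : IsLastStarIndex p L X) (hX : IsCplx X)
    (hv : v ∈ verts (tailStar L X i) \ verts (tailStar L X (i + 1))) : p v = i := by
  obtain ⟨hi, hi'⟩ := mem_sdiff.1 hv
  have hvX : v ∈ verts X := verts_mono starSet_subset hi
  rw [← hp.le_iff_mem_verts_tailStar hX hvX] at hi hi'
  omega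

end IsLastStarIndex

omit [DecidableEq V] in
/-- Within a block of constant `p`, the only relations of `≺'` put everything before the single
vertex of `W`, which comes last. -/
theorem pairwise_not_starLT (hL : ∀ j (hj : j < L.length), p L[j] = j) (hi : i < L.length)
    (hnd : (A ++ [L[i]]).Nodup) (hA : ∀ a ∈ A ++ [L[i]], p a = i) :
    (A ++ [L[i]]).Pairwise fun a b => ¬ StarLT p L b a := by
  have not_starLT : ∀ a ∈ A, ∀ b ∈ A ++ [L[i]], ¬ StarLT p L b a := by
    rintro a ha b hb (hlt | ⟨-, haL, -⟩)
    · rw [hA a (List.mem_append_left _ ha), hA b hb] at hlt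
      exact lt_irrefl i hlt
    · obtain ⟨j, hj, rfl⟩ := List.mem_iff_getElem.1 haL
      obtain rfl : j = i := (hL j hj).symm.trans (hA _ (List.mem_append_left _ ha))
      exact List.disjoint_of_nodup_append hnd ha (List.mem_singleton_self _)
  refine List.pairwise_append.2 ⟨?_, List.pairwise_singleton _ _, fun a ha b hb => ?_⟩
  · exact List.pairwise_of_forall_mem_list fun a ha b hb =>
      not_starLT a ha b (List.mem_append_left _ hb)
  · exact not_starLT a ha b (List.mem_append_right _ hb)

theorem IsStarShedding.exists_sheddingOrder_tailStar (h : IsStarShedding d L X) (hX : IsCplx X)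
    (hp : IsLastStarIndex p L X) (hL : ∀ j (hj : j < L.length), p L[j] = j) (hi : i < L.length) :
    ∃ M, SheddingOrder M (tailStar L X i) ∧ M.Pairwise fun a b => ¬ StarLT p L b a := by
  induction Nat.le_sub_one_of_lt hi using Nat.decreasingInduction with
  | self =>
    obtain ⟨M, hM⟩ := h.vd_lk_last.exists_sheddingOrder hX.lk
    have hcone := hM.cone hX.lk notMem_verts_lk_self
    rw [← star_eq_cone_lk hX, ← tailStar_last h.ne_nil, List.getLast_eq_getElem] at hcone
    refine ⟨_, hcone, pairwise_not_starLT hL hi hcone.nodup fun a ha => ?_⟩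
    have haT : a ∈ verts (tailStar L X (L.length - 1)) :=
      hcone.toFinset_eq ▸ List.mem_toFinset.2 ha
    have haX : a ∈ verts X := verts_mono starSet_subset haT
    have := (hp.le_iff_mem_verts_tailStar hX haX).2 haT
    have := (hp a haX).1
    omega
  | of_succ k hk ih =>
    obtain ⟨A, hA⟩ := h.exists_shedsTo k (by omega)
    obtain ⟨M, hM, hMpw⟩ := ih (by omega)
    have hAM := hA.sheddingOrder hX.starSet hM
    have apply_eq : ∀ a ∈ A ++ [L[k]], p a = k := fun a ha =>
      hp.apply_eq_of_mem_verts_sdiff hX (hA.mem_verts_sdiff a ha)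
    refine ⟨_, hAM, List.pairwise_append.2 ⟨?_, hMpw, fun a ha b hb => ?_⟩⟩
    · exact pairwise_not_starLT hL (by omega) hAM.nodup.of_append_left apply_eq
    · have hbT : b ∈ verts (tailStar L X (k + 1)) := hM.toFinset_eq ▸ List.mem_toFinset.2 hb
      have hpb := (hp.le_iff_mem_verts_tailStar hX (verts_mono starSet_subset hbT)).2 hbT
      have hpa := apply_eq a ha
      rintro (hlt | ⟨heq, -, -⟩) <;> omega

theorem InducesStarDecomp.exists_sheddingOrder (h : InducesStarDecomp L X X₀) (hX : IsCplx X)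
    (hpure : PureDim X d) (hp : IsLastStarIndex p L X) :
    ∃ M, SheddingOrder M X ∧ M.Pairwise fun a b => ¬ StarLT p L b a := by
  have hsub := h.subset_verts
  have hshed := h.isStarShedding hX hpure
  obtain ⟨-, rfl, -⟩ | ⟨hne, hnd, hsp, -⟩ := h
  · exact ⟨[], .simplex ∅ [] List.nodup_nil rfl, List.Pairwise.nil⟩
  · have hL : ∀ j (hj : j < L.length), p L[j] = j := fun _ => hp.apply_getElem hsp hnd hsub
    have := (hshed hne).exists_sheddingOrder_tailStar hX hp hL
      (List.length_pos_of_ne_nil hne)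
    rwa [tailStar_zero hsp] at this

end LinearExtension

/-- Let `X` be star decomposable, with `W = L.toFinset` inducing a star
partition and the order `≺` (encoded by the list `L`) inducing a star decomposition of
`(X, X₀)`.  For `v ∈ V(X)` let `p v` be (the index in `L` of) the `≺`-last vertex of `W`
whose star contains `v`.  Then `X` is vertex decomposable, with a shedding order `M`
extending the partial order `≺'` (`v ≺' v'` iff `p v ≺ p v'`, or `p v = p v'` with
`v' ∈ W` and `v ≠ v'`). -/
theorem starDec_implies_sheddingOrder {V : Type*} [DecidableEq V] (X : Finset (Finset V))
    (hX : IsCplx X) (X₀ : Finset V) (hSD : StarDec X X₀) (L : List V)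
    (hL : InducesStarDecomp L X X₀) (p : V → ℕ)
    (hp : ∀ v ∈ verts X, ∃ h : p v < L.length,
      ({v} : Finset V) ∈ star {L.get ⟨p v, h⟩} X ∧
        ∀ j, (hj : j < L.length) → p v < j → ({v} : Finset V) ∉ star {L.get ⟨j, hj⟩} X) :
    ∃ M : List V, M.Nodup ∧ M.toFinset = verts X ∧ SheddingOrder M X ∧
      ∀ i j, (hi : i < M.length) → (hj : j < M.length) →
        (p (M.get ⟨i, hi⟩) < p (M.get ⟨j, hj⟩) ∨
          (p (M.get ⟨i, hi⟩) = p (M.get ⟨j, hj⟩) ∧ M.get ⟨j, hj⟩ ∈ L ∧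
            M.get ⟨i, hi⟩ ≠ M.get ⟨j, hj⟩)) → i < j := by
  obtain ⟨d, hpure⟩ := hSD.exists_pureDim
  obtain ⟨M, hM, hpairwise⟩ := hL.exists_sheddingOrder hX hpure hp
  refine ⟨M, hM.nodup, hM.toFinset_eq, hM, fun i j hi hj hlt => ?_⟩
  by_contra! hji
  obtain rfl | hji := hji.eq_or_lt
  · exact hlt.elim (lt_irrefl _) fun h => h.2.2 rfl
  · exact List.pairwise_iff_getElem.1 hpairwise j i hj hi hji hlt

end Paper
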